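/- Consider OMWU with step size η > 0 in the 2-periodic matching-pennies game (encoded by sequences a, b as in the context). Assume a(0) ≠ 1/2 and b(0) ≠ 1/2, set p = (1/2)·min(|a(0) − 1/2|, |b(0) − 1/2|), and assume p < 1/4 and 16·√η ≤ p. Then the KL-divergence to the equilibrium diverges: D(t) → +∞ as t → ∞. -/

import Mathlib

/-- KL-divergence from the uniform strategy `(1/2, 1/2)` to `(x, 1-x)`. -/
noncomputable def KLhalf (x : ℝ) : ℝ :=
  (1/2) * Real.log (1/(2*x)) + (1/2) * Real.log (1/(2*(1-x)))

/-- OMWU dynamics with step size `η` in the 2-periodic matching-pennies game: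
`a t` is the probability player 1 assigns to its first strategy at time `t`,
`b t` that of player 2. -/
def OMWU (η : ℝ) (a b : ℤ → ℝ) : Prop :=
  (∀ t : ℤ, -1 ≤ t → (0 < a t ∧ a t < 1) ∧ (0 < b t ∧ b t < 1)) ∧
  (∀ t : ℤ, 0 ≤ t → Even t →
    (a (t+1) = a t * Real.exp (-(2*η)*(1 - b t) - η*(1 - b (t-1))) /
      (a t * Real.exp (-(2*η)*(1 - b t) - η*(1 - b (t-1)))
        + (1 - a t) * Real.exp (-(2*η)*(b t) - η*(b (t-1)))) ∧
    b (t+1) = b t * Real.exp ((2*η)*(1 - a t) + η*(1 - a (t-1))) /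
      (b t * Real.exp ((2*η)*(1 - a t) + η*(1 - a (t-1)))
        + (1 - b t) * Real.exp ((2*η)*(a t) + η*(a (t-1)))))) ∧
  (∀ t : ℤ, 0 ≤ t → Odd t →
    (a (t+1) = a t * Real.exp ((2*η)*(1 - b t) + η*(1 - b (t-1))) /
      (a t * Real.exp ((2*η)*(1 - b t) + η*(1 - b (t-1)))
        + (1 - a t) * Real.exp ((2*η)*(b t) + η*(b (t-1)))) ∧
    b (t+1) = b t * Real.exp (-(2*η)*(1 - a t) - η*(1 - a (t-1))) /
      (b t * Real.exp (-(2*η)*(1 - a t) - η*(1 - a (t-1)))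
        + (1 - b t) * Real.exp (-(2*η)*(a t) - η*(a (t-1))))))

/-!
In log-odds coordinates the game becomes `u (t + 1) = u t ± drift v`, `v (t + 1) = v t ∓ drift u`,
with signs alternating in `t`. Over an even-odd pair of steps the first-order contributions cancel:
writing `v (t - 1) = v t - d'` and `v (t + 1) = v t - d`, the coordinate `u` moves by `η` times
`bias (v t) + bias (v t - d') - 2 * bias (v t - d)`. While `u t` is bounded away from `0`, `d` and
`d'` are positive and nearly equal, so this is positive, comparable to `d` times the slope of the
sigmoid at `v t`. Hence `|u|` increases along even times and, by the symmetry `(u, v) ↦ (v, -u)`,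
so does `|v|`. If both stayed bounded they would converge, and the increments would vanish in the
limit, which they do not. The KL-divergence is comparable to `|u| + |v|`.
-/

open Filter Real Topology

section Sigmoid

lemma sigmoid_sub_sigmoid (x y : ℝ) :
    sigmoid x - sigmoid y = sigmoid x * sigmoid (-y) * (1 - exp (y - x)) := by
  have hx := sigmoid_mul_rexp_neg x
  have hy : sigmoid (-y) * exp y = sigmoid y := by simpa using sigmoid_mul_rexp_neg (-y)
  calc sigmoid x - sigmoid y
      = sigmoid x * sigmoid (-y) - sigmoid (-x) * sigmoid y := by
        rw [sigmoid_neg, sigmoid_neg]; ring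
    _ = sigmoid x * sigmoid (-y) - sigmoid x * exp (-x) * (sigmoid (-y) * exp y) := by
        rw [hx, hy]
    _ = sigmoid x * sigmoid (-y) * (1 - exp (y - x)) := by
        rw [sub_eq_neg_add y x, exp_add]; ring

lemma abs_sigmoid_sub_sigmoid_le (x y : ℝ) : |sigmoid x - sigmoid y| ≤ 1 / 4 * |x - y| := by
  refine convex_univ.norm_image_sub_le_of_norm_deriv_le
    (fun z _ ↦ (hasDerivAt_sigmoid z).differentiableAt) (fun z _ ↦ ?_)
    (Set.mem_univ y) (Set.mem_univ x)
  have h0 := sigmoid_pos z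
  have h1 := sigmoid_lt_one z
  rw [(hasDerivAt_sigmoid z).deriv, norm_of_nonneg (by nlinarith)]
  nlinarith [sq_nonneg (sigmoid z - 1 / 2)]

lemma le_sigmoid_add_sigmoid_sub {d h : ℝ} (x : ℝ) (hd : 0 ≤ d) (hh : 0 ≤ h) :
    sigmoid x * sigmoid (d - x) * (2 - exp (-d) - exp h) ≤
      sigmoid x + sigmoid (x - d - h) - 2 * sigmoid (x - d) := by
  have hgain := sigmoid_sub_sigmoid x (x - d)
  have hloss := sigmoid_sub_sigmoid (x - d - h) (x - d)
  rw [neg_sub, sub_sub_cancel_left] at hgain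
  rw [neg_sub, sub_sub_cancel] at hloss
  have hmono : sigmoid (x - d - h) ≤ sigmoid x := sigmoid_le (by linarith)
  have hmul : sigmoid (x - d - h) * (sigmoid (d - x) * (exp h - 1)) ≤
      sigmoid x * (sigmoid (d - x) * (exp h - 1)) :=
    mul_le_mul_of_nonneg_right hmono
      (mul_nonneg (sigmoid_nonneg _) (sub_nonneg.2 (one_le_exp hh)))
  linarith

lemma div_eight_le_two_sub_exp_sub_exp {d : ℝ} (hd : 0 ≤ d) (hd' : d ≤ 3 / 4) :
    d / 8 ≤ 2 - exp (-d) - exp (d / 3) := by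
  have hneg : exp (-d) ≤ 1 / (1 + d) := by
    rw [exp_neg, one_div]
    exact inv_anti₀ (by positivity) (by linarith [add_one_le_exp d])
  have hthird : exp (d / 3) ≤ 1 / (1 - d / 3) :=
    exp_bound_div_one_sub_of_interval (by positivity) (by linarith)
  have hrational : d / 8 ≤ 2 - 1 / (1 + d) - 1 / (1 - d / 3) := by
    have hpos : 0 < 3 - d := by linarith
    have hnum : (1 + d) * (3 - d) ≤ (2 - 2 * d) * 8 := by nlinarith
    have heq : 2 - 1 / (1 + d) - 1 / (1 - d / 3) = d * (2 - 2 * d) / ((1 + d) * (3 - d)) := by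
      field
    rw [heq, div_le_div_iff₀ (by norm_num) (by positivity), mul_assoc]
    exact mul_le_mul_of_nonneg_left hnum hd
  linarith

end Sigmoid

section Bias

/-- The bias `2 p - 1` towards the first strategy of the mixed strategy `(p, 1 - p)`, as a
function of the log-odds `x` of `p`. -/
noncomputable def bias (x : ℝ) : ℝ := 2 * sigmoid x - 1

lemma bias_neg (x : ℝ) : bias (-x) = -bias x := by
  rw [bias, bias, sigmoid_neg]; ring

lemma bias_monotone : Monotone bias := fun _ _ hxy ↦ by
  unfold bias; gcongr

lemma abs_bias (x : ℝ) : |bias x| = bias |x| := by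
  have h0 : bias 0 = 0 := by norm_num [bias]
  rcases le_total 0 x with hx | hx
  · rw [abs_of_nonneg hx, abs_of_nonneg (h0.ge.trans (bias_monotone hx))]
  · rw [abs_of_nonpos hx, bias_neg, abs_of_nonpos ((bias_monotone hx).trans h0.le)]

lemma abs_bias_le_one (x : ℝ) : |bias x| ≤ 1 := by
  rw [abs_le, bias]
  constructor <;> linarith [sigmoid_pos x, sigmoid_lt_one x]

lemma abs_bias_sub_bias_le (x y : ℝ) : |bias x - bias y| ≤ 1 / 2 * |x - y| := by
  have heq : bias x - bias y = 2 * (sigmoid x - sigmoid y) := by rw [bias, bias]; ring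
  rw [heq, abs_mul, abs_two]
  linarith [abs_sigmoid_sub_sigmoid_le x y]

lemma le_bias_add_bias_sub {d d' : ℝ} (x : ℝ) (hd : 0 ≤ d) (hd34 : d ≤ 3 / 4)
    (hd' : d' ≤ 4 / 3 * d) :
    d / 4 * (sigmoid x * sigmoid (-x)) ≤ bias x + bias (x - d') - 2 * bias (x - d) := by
  have hsecond := le_sigmoid_add_sigmoid_sub x hd (by positivity : 0 ≤ d / 3)
  have hd'_mono : sigmoid (x - d - d / 3) ≤ sigmoid (x - d') := sigmoid_le (by linarith)
  have hslope : sigmoid x * sigmoid (-x) ≤ sigmoid x * sigmoid (d - x) :=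
    mul_le_mul_of_nonneg_left (sigmoid_le (by linarith)) (sigmoid_nonneg x)
  have hlower : sigmoid x * sigmoid (-x) * (d / 8) ≤
      sigmoid x * sigmoid (d - x) * (2 - exp (-d) - exp (d / 3)) :=
    mul_le_mul hslope (div_eight_le_two_sub_exp_sub_exp hd hd34) (by positivity)
      (mul_nonneg (sigmoid_nonneg _) (sigmoid_nonneg _))
  unfold bias
  linarith

end Bias

section LimitArguments

lemma tendsto_add_atTop_of_add_le_succ {p q : ℕ → ℝ} {φ : ℝ → ℝ} (hφ : Continuous φ)
    (hφ_pos : ∀ x, 0 < φ x) (hp : ∀ k, p k + φ (q k) ≤ p (k + 1)) (hq : Monotone q) :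
    Tendsto (fun k ↦ p k + q k) atTop atTop := by
  have hp_mono : Monotone p := monotone_nat_of_le_succ fun k ↦ by linarith [hp k, hφ_pos (q k)]
  rcases tendsto_atTop_of_monotone hp_mono with hp_top | ⟨P, hP⟩
  · exact tendsto_atTop_add_right_of_le _ (q 0) hp_top fun k ↦ hq k.zero_le
  rcases tendsto_atTop_of_monotone hq with hq_top | ⟨Q, hQ⟩
  · exact tendsto_atTop_add_left_of_le _ (p 0) (fun k ↦ hp_mono k.zero_le) hq_top
  have hlim : P + φ Q ≤ P :=
    le_of_tendsto_of_tendsto' (hP.add (hφ.continuousAt.tendsto.comp hQ))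
      (hP.comp (tendsto_add_atTop_nat 1)) hp
  linarith [hφ_pos Q]

lemma tendsto_atTop_of_tendsto_even {w : ℤ → ℝ} {c : ℝ}
    (hw : ∀ t, 0 ≤ t → w t - c ≤ w (t + 1))
    (heven : Tendsto (fun k : ℕ ↦ w (2 * k + 2)) atTop atTop) : Tendsto w atTop atTop := by
  refine tendsto_atTop.2 fun M ↦ ?_
  obtain ⟨K, hK⟩ := eventually_atTop.1 (heven.eventually_ge_atTop (M + |c|))
  filter_upwards [eventually_ge_atTop (2 * (K : ℤ) + 2)] with t ht
  obtain ⟨k, hk, rfl | rfl⟩ : ∃ k : ℕ, K ≤ k ∧ (t = 2 * k + 2 ∨ t = 2 * k + 2 + 1) :=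
    ⟨((t - 2) / 2).toNat, by omega, by omega⟩
  · linarith [hK k hk, abs_nonneg c]
  · linarith [hK k hk, hw (2 * k + 2) (by omega), le_abs_self c]

end LimitArguments

/-- The optimistic update of a player's log-odds, up to sign, in response to the opponent's log-odds
sequence `w`: the current bias counts twice and the previous one is added. -/
noncomputable def drift (η : ℝ) (w : ℤ → ℝ) (t : ℤ) : ℝ :=
  η * (2 * bias (w t) + bias (w (t - 1)))

/-- The OMWU dynamics in the log-odds `u`, `v` of the two players. The sign `(-1) ^ t` is the
alternation of the payoff matrices. -/
structure LogOddsDynamics (η : ℝ) (u v : ℤ → ℝ) : Prop where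
  fst_succ : ∀ t, 0 ≤ t → u (t + 1) = u t + (-1) ^ t * drift η v t
  snd_succ : ∀ t, 0 ≤ t → v (t + 1) = v t - (-1) ^ t * drift η u t

lemma drift_neg (η : ℝ) (w : ℤ → ℝ) (t : ℤ) : drift η (-w) t = -drift η w t := by
  simp only [drift, Pi.neg_apply, bias_neg]; ring

lemma abs_drift_le {η : ℝ} (hη : 0 ≤ η) (w : ℤ → ℝ) (t : ℤ) : |drift η w t| ≤ 3 * η := by
  have hcur := abs_le.1 (abs_bias_le_one (w t))
  have hprev := abs_le.1 (abs_bias_le_one (w (t - 1)))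
  rw [drift, abs_mul, abs_of_nonneg hη, mul_comm]
  gcongr
  rw [abs_le]
  constructor <;> linarith

/-- A lower bound for the growth of one player's log-odds over two rounds, when the opponent's
log-odds are `x`; the factor `sigmoid x * sigmoid (-x)` is the derivative of `sigmoid` at `x`. -/
noncomputable def twoStepGain (η x : ℝ) : ℝ := 3 * η ^ 3 * (sigmoid x * sigmoid (-x))

lemma twoStepGain_neg (η x : ℝ) : twoStepGain η (-x) = twoStepGain η x := by
  rw [twoStepGain, twoStepGain, neg_neg, mul_comm (sigmoid x)]

lemma twoStepGain_abs (η x : ℝ) : twoStepGain η |x| = twoStepGain η x := by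
  rcases abs_choice x with hx | hx <;> rw [hx]
  exact twoStepGain_neg η x

lemma twoStepGain_pos {η : ℝ} (hη : 0 < η) (x : ℝ) : 0 < twoStepGain η x :=
  mul_pos (by positivity) (mul_pos (sigmoid_pos _) (sigmoid_pos _))

lemma continuous_twoStepGain (η : ℝ) : Continuous (twoStepGain η) := by
  unfold twoStepGain; fun_prop

namespace LogOddsDynamics

variable {η : ℝ} {u v : ℤ → ℝ} {t : ℤ}

lemma rotate (h : LogOddsDynamics η u v) : LogOddsDynamics η v (-u) where
  fst_succ t ht := by rw [h.snd_succ t ht, drift_neg]; ring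
  snd_succ t ht := by simp only [Pi.neg_apply, h.fst_succ t ht]; ring

lemma neg (h : LogOddsDynamics η u v) : LogOddsDynamics η (-u) (-v) := h.rotate.rotate

lemma abs_succ_sub_le (h : LogOddsDynamics η u v) (hη : 0 ≤ η) (ht : 0 ≤ t) :
    |u (t + 1) - u t| ≤ 3 * η := by
  rw [h.fst_succ t ht, add_sub_cancel_left, abs_mul, abs_neg_one_zpow, one_mul]
  exact abs_drift_le hη v t

lemma abs_bias_succ_sub_le (h : LogOddsDynamics η u v) (hη : 0 ≤ η) (ht : 0 ≤ t) :
    |bias (u (t + 1)) - bias (u t)| ≤ 3 / 2 * η := by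
  linarith [abs_bias_sub_bias_le (u (t + 1)) (u t), h.abs_succ_sub_le hη ht]

-- Consecutive biases differ by at most `3 / 2 * η`, so above the threshold `5 * η` the relative
-- change of the drift in one round is at most `1 / 3`.
lemma drift_bounds (h : LogOddsDynamics η u v) (hη : 0 ≤ η) (ht : 2 ≤ t)
    (hu : 5 * η ≤ bias (u t)) :
    12 * η ^ 2 ≤ drift η u t ∧ drift η u t ≤ 3 / 4 ∧ drift η u (t - 1) ≤ 4 / 3 * drift η u t := by
  have hcur := abs_le.1 (h.abs_bias_succ_sub_le hη (t := t - 1) (by omega))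
  have hprev := abs_le.1 (h.abs_bias_succ_sub_le hη (t := t - 1 - 1) (by omega))
  rw [sub_add_cancel] at hcur hprev
  refine ⟨?_, ?_, ?_⟩
  · rw [drift]; nlinarith
  · linarith [le_of_abs_le (abs_drift_le hη u t), le_of_abs_le (abs_bias_le_one (u t))]
  · calc drift η u (t - 1)
        ≤ η * (4 / 3 * (2 * bias (u t) + bias (u (t - 1)))) := by
          rw [drift]; gcongr; linarith
      _ = 4 / 3 * drift η u t := by rw [drift]; ring

lemma two_step_sub (h : LogOddsDynamics η u v) (ht : 2 ≤ t) (heven : Even t) :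
    u (t + 2) - u t =
      η * (bias (v t) + bias (v t - drift η u (t - 1)) - 2 * bias (v t - drift η u t)) := by
  have hsign : (-1 : ℝ) ^ t = 1 := heven.neg_one_zpow
  have hu₁ := h.fst_succ t (by omega)
  have hu₂ := h.fst_succ (t + 1) (by omega)
  have hv₀ := h.snd_succ (t - 1) (by omega)
  have hv₁ := h.snd_succ t (by omega)
  rw [hsign] at hu₁ hv₁
  rw [heven.add_one.neg_one_zpow, add_assoc, one_add_one_eq_two] at hu₂
  rw [(heven.sub_odd odd_one).neg_one_zpow, sub_add_cancel] at hv₀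
  have hprev : v t - drift η u (t - 1) = v (t - 1) := by linarith
  have hnext : v t - drift η u t = v (t + 1) := by linarith
  rw [hprev, hnext, hu₂, hu₁, drift, drift, add_sub_cancel_right]
  ring

lemma add_le_two_step (h : LogOddsDynamics η u v) (hη : 0 ≤ η) (ht : 2 ≤ t) (heven : Even t)
    (hu : 5 * η ≤ bias (u t)) : u t + twoStepGain η (v t) ≤ u (t + 2) := by
  obtain ⟨hlower, hupper, hratio⟩ := h.drift_bounds hη ht hu
  have hgain := le_bias_add_bias_sub (v t) (by nlinarith) hupper hratio
  have hslope : 0 ≤ sigmoid (v t) * sigmoid (-v t) :=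
    mul_nonneg (sigmoid_nonneg _) (sigmoid_nonneg _)
  have hstep : twoStepGain η (v t) ≤ u (t + 2) - u t :=
    calc twoStepGain η (v t)
        = η * (12 * η ^ 2 / 4 * (sigmoid (v t) * sigmoid (-v t))) := by rw [twoStepGain]; ring
      _ ≤ η * (drift η u t / 4 * (sigmoid (v t) * sigmoid (-v t))) := by gcongr
      _ ≤ u (t + 2) - u t := by rw [h.two_step_sub ht heven]; gcongr
  linarith

lemma abs_add_le_two_step (h : LogOddsDynamics η u v) (hη : 0 ≤ η) (ht : 2 ≤ t) (heven : Even t)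
    (hu : 5 * η ≤ bias |u t|) : |u t| + twoStepGain η |v t| ≤ |u (t + 2)| := by
  rw [twoStepGain_abs]
  rcases abs_choice (u t) with hut | hut <;> rw [hut] at hu ⊢
  · exact (h.add_le_two_step hη ht heven hu).trans (le_abs_self _)
  · have hneg := h.neg.add_le_two_step hη ht heven hu
    simp only [Pi.neg_apply, twoStepGain_neg] at hneg
    exact hneg.trans (neg_le_abs _)

lemma abs_even_add_le_succ (h : LogOddsDynamics η u v) (hη : 0 ≤ η) (k : ℕ)
    (hu : 5 * η ≤ bias |u (2 * k + 2)|) :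
    |u (2 * k + 2)| + twoStepGain η |v (2 * k + 2)| ≤ |u (2 * (k + 1 : ℕ) + 2)| := by
  have hindex : (2 * ((k + 1 : ℕ) : ℤ) + 2) = 2 * k + 2 + 2 := by push_cast; ring
  rw [hindex]
  exact h.abs_add_le_two_step hη (by omega) ⟨k + 1, by ring⟩ hu

-- Two-step growth refers to the state at time `t - 2`, so it only starts at `t = 2`; reaching that
-- time costs at most `3 * η` of the initial bias.
lemma le_bias_abs_two (h : LogOddsDynamics η u v) (hη : 0 ≤ η) (hu : 8 * η ≤ |bias (u 0)|) :
    5 * η ≤ bias |u 2| := by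
  have h₁ := h.abs_bias_succ_sub_le hη (t := 0) le_rfl
  have h₂ := h.abs_bias_succ_sub_le hη (t := 1) zero_le_one
  rw [zero_add, abs_sub_comm] at h₁
  rw [one_add_one_eq_two, abs_sub_comm] at h₂
  rw [← abs_bias]
  linarith [abs_sub_abs_le_abs_sub (bias (u 0)) (bias (u 1)),
    abs_sub_abs_le_abs_sub (bias (u 1)) (bias (u 2))]

lemma le_bias_abs_even (h : LogOddsDynamics η u v) (hη : 0 < η) (hu : 8 * η ≤ |bias (u 0)|)
    (k : ℕ) : 5 * η ≤ bias |u (2 * k + 2)| := by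
  induction k with
  | zero => simpa using h.le_bias_abs_two hη.le hu
  | succ k ih =>
    refine ih.trans (bias_monotone ?_)
    linarith [h.abs_even_add_le_succ hη.le k ih, twoStepGain_pos hη |v (2 * k + 2)|]

theorem tendsto_abs_add_abs_atTop (h : LogOddsDynamics η u v) (hη : 0 < η)
    (hu : 8 * η ≤ |bias (u 0)|) (hv : 8 * η ≤ |bias (v 0)|) :
    Tendsto (fun t ↦ |u t| + |v t|) atTop atTop := by
  have hu_succ (k : ℕ) :=
    h.abs_even_add_le_succ hη.le k (h.le_bias_abs_even hη hu k)
  have hv_succ (k : ℕ) :=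
    h.rotate.abs_even_add_le_succ hη.le k (h.rotate.le_bias_abs_even hη hv k)
  have hv_mono : Monotone fun k : ℕ ↦ |v (2 * k + 2)| := monotone_nat_of_le_succ fun k ↦ by
    linarith [hv_succ k, twoStepGain_pos hη |(-u) (2 * k + 2)|]
  refine tendsto_atTop_of_tendsto_even (c := 6 * η) (fun t ht ↦ ?_)
    (tendsto_add_atTop_of_add_le_succ (continuous_twoStepGain η) (twoStepGain_pos hη)
      hu_succ hv_mono)
  have hu_step := h.abs_succ_sub_le hη.le ht
  have hv_step := h.rotate.abs_succ_sub_le hη.le ht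
  rw [abs_sub_comm] at hu_step hv_step
  linarith [abs_sub_abs_le_abs_sub (u t) (u (t + 1)), abs_sub_abs_le_abs_sub (v t) (v (t + 1))]

end LogOddsDynamics

section Strategies

/-- The log-odds of a probability, the inverse of `Real.sigmoid` on `(0, 1)`. -/
noncomputable def logit (x : ℝ) : ℝ := log (x / (1 - x))

lemma sigmoid_logit {x : ℝ} (h0 : 0 < x) (h1 : x < 1) : sigmoid (logit x) = x := by
  have hpos : 0 < 1 - x := sub_pos.2 h1
  rw [sigmoid_def, logit, exp_neg, exp_log (by positivity)]
  field

lemma bias_logit {x : ℝ} (h0 : 0 < x) (h1 : x < 1) : bias (logit x) = 2 * x - 1 := by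
  rw [bias, sigmoid_logit h0 h1]

lemma abs_bias_logit {x : ℝ} (h0 : 0 < x) (h1 : x < 1) :
    |bias (logit x)| = 2 * |x - 1 / 2| := by
  rw [bias_logit h0 h1, ← abs_two, ← abs_mul, abs_two]
  ring_nf

lemma logit_expWeights {x : ℝ} (h0 : 0 < x) (h1 : x < 1) (A B : ℝ) :
    logit (x * exp A / (x * exp A + (1 - x) * exp B)) = logit x + (A - B) := by
  have hpos : 0 < 1 - x := sub_pos.2 h1
  have hden : 0 < x * exp A + (1 - x) * exp B := by positivity
  have hodds : x * exp A / (x * exp A + (1 - x) * exp B) /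
      (1 - x * exp A / (x * exp A + (1 - x) * exp B)) = x / (1 - x) * exp (A - B) := by
    rw [one_sub_div hden.ne', add_sub_cancel_left, exp_sub]
    field
  rw [logit, hodds, log_mul (by positivity) (exp_pos _).ne', log_exp, logit]

lemma abs_logit_div_two_sub_log_two_le_KLhalf {x : ℝ} (h0 : 0 < x) (h1 : x < 1) :
    |logit x| / 2 - log 2 ≤ KLhalf x := by
  have hpos : 0 < 1 - x := sub_pos.2 h1
  have hlog := log_nonpos h0.le h1.le
  have hlog' := log_nonpos hpos.le (by linarith)
  have hKL : KLhalf x = -(log x + log (1 - x)) / 2 - log 2 := by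
    rw [KLhalf, one_div (2 * x), one_div (2 * (1 - x)), log_inv, log_inv,
      log_mul two_ne_zero h0.ne', log_mul two_ne_zero hpos.ne']
    ring
  have habs : |log x - log (1 - x)| ≤ -(log x + log (1 - x)) :=
    abs_le.2 ⟨by linarith, by linarith⟩
  rw [hKL, logit, log_div h0.ne' hpos.ne']
  linarith

end Strategies

lemma OMWU.logOddsDynamics {η : ℝ} {a b : ℤ → ℝ} (h : OMWU η a b) :
    LogOddsDynamics η (fun t ↦ logit (a t)) (fun t ↦ logit (b t)) := by
  obtain ⟨hmem, heven, hodd⟩ := h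
  have hdrift_a (t : ℤ) (ht : 0 ≤ t) : drift η (fun t ↦ logit (a t)) t =
      η * (2 * (2 * a t - 1) + (2 * a (t - 1) - 1)) := by
    rw [drift, bias_logit (hmem t (by omega)).1.1 (hmem t (by omega)).1.2,
      bias_logit (hmem (t - 1) (by omega)).1.1 (hmem (t - 1) (by omega)).1.2]
  have hdrift_b (t : ℤ) (ht : 0 ≤ t) : drift η (fun t ↦ logit (b t)) t =
      η * (2 * (2 * b t - 1) + (2 * b (t - 1) - 1)) := by
    rw [drift, bias_logit (hmem t (by omega)).2.1 (hmem t (by omega)).2.2,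
      bias_logit (hmem (t - 1) (by omega)).2.1 (hmem (t - 1) (by omega)).2.2]
  refine ⟨fun t ht ↦ ?_, fun t ht ↦ ?_⟩ <;> obtain ⟨⟨ha0, ha1⟩, hb0, hb1⟩ := hmem t (by omega) <;>
    rcases Int.even_or_odd t with hpar | hpar
  · rw [(heven t ht hpar).1, logit_expWeights ha0 ha1, hdrift_b t ht, hpar.neg_one_zpow]; ring
  · rw [(hodd t ht hpar).1, logit_expWeights ha0 ha1, hdrift_b t ht, hpar.neg_one_zpow]; ring
  · rw [(heven t ht hpar).2, logit_expWeights hb0 hb1, hdrift_a t ht, hpar.neg_one_zpow]; ring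
  · rw [(hodd t ht hpar).2, logit_expWeights hb0 hb1, hdrift_a t ht, hpar.neg_one_zpow]; ring

lemma four_mul_le_of_sixteen_mul_sqrt_le {η p : ℝ} (hη : 0 ≤ η) (hp : p < 1 / 4)
    (h : 16 * √η ≤ p) : 4 * η ≤ p := by
  nlinarith [sq_sqrt hη, sqrt_nonneg η]

theorem omwu_kl_divergence_tendsto_atTop_general {η : ℝ} (hη : 0 < η) {a b : ℤ → ℝ}
    (h : OMWU η a b) (ha : 4 * η ≤ |a 0 - 1 / 2|) (hb : 4 * η ≤ |b 0 - 1 / 2|) :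
    Tendsto (fun t : ℤ ↦ KLhalf (a t) + KLhalf (b t)) atTop atTop := by
  obtain ⟨⟨ha0, ha1⟩, hb0, hb1⟩ := h.1 0 (by norm_num)
  have hlogit := h.logOddsDynamics.tendsto_abs_add_abs_atTop hη
    (by linarith [abs_bias_logit ha0 ha1]) (by linarith [abs_bias_logit hb0 hb1])
  refine tendsto_atTop_mono' atTop ?_
    (tendsto_atTop_add_const_right atTop (-(2 * log 2)) (hlogit.atTop_div_const two_pos))
  filter_upwards [eventually_ge_atTop 0] with t ht
  obtain ⟨⟨hat0, hat1⟩, hbt0, hbt1⟩ := h.1 t (by omega)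
  linarith [abs_logit_div_two_sub_log_two_le_KLhalf hat0 hat1,
    abs_logit_div_two_sub_log_two_le_KLhalf hbt0 hbt1]

/-- If OMWU in the 2-periodic matching-pennies game is started at a point with
`a 0 ≠ 1/2`, `b 0 ≠ 1/2`, with `p = (1/2)·min(|a 0 − 1/2|, |b 0 − 1/2|)` satisfying
`p < 1/4` and `16·√η ≤ p`, then the KL-divergence to the equilibrium diverges. -/
theorem omwu_kl_divergence_tendsto_atTop
    (η : ℝ) (hη : 0 < η) (a b : ℤ → ℝ) (h : OMWU η a b)
    (ha0 : a 0 ≠ 1/2) (hb0 : b 0 ≠ 1/2)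
    (p : ℝ) (hpdef : p = (1/2) * min |a 0 - 1/2| |b 0 - 1/2|)
    (hp4 : p < 1/4) (hpη : 16 * Real.sqrt η ≤ p) :
    Filter.Tendsto (fun t : ℤ => KLhalf (a t) + KLhalf (b t))
      Filter.atTop Filter.atTop := by
  have hη4 : 4 * η ≤ p := four_mul_le_of_sixteen_mul_sqrt_le hη.le hp4 hpη
  exact omwu_kl_divergence_tendsto_atTop_general hη h
    (by linarith [min_le_left |a 0 - 1/2| |b 0 - 1/2|])
    (by linarith [min_le_right |a 0 - 1/2| |b 0 - 1/2|])
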